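/- Let V be a finite set with |V| = n ≥ 2 and let G be a simple graph on V in which every vertex has degree at most 2 (so every connected component of G is a path or a cycle). Let c be the number of connected components of G that contain a cycle (equivalently, components with as many edges as vertices). Then the minimum, over all spanning trees T of the complete graph on V, of the weight of T in the (1,2)-metric obtained from G equals 2(n − 1) − (|E(G)| − c). -/

import Mathlib

open SimpleGraph Finset
open scoped Classical

/-- The weight of the spanning tree `T` of the complete graph on `V` in the
`(1,2)`-metric obtained from `G` : each edge of `T` contributes `1` if it is an
edge of `G` and `2` otherwise. -/
noncomputable def metricWeight {V : Type*} [Fintype V] (G T : SimpleGraph V) : ℕ :=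
  ∑ e ∈ T.edgeFinset, if e ∈ G.edgeSet then 1 else 2

/-- The number of connected components of `G` that contain a cycle, i.e. whose induced
subgraph is not acyclic. -/
noncomputable def numCycleComponents {V : Type*} (G : SimpleGraph V) : ℕ :=
  Nat.card {K : G.ConnectedComponent // ¬ (G.induce K.supp).IsAcyclic}


/-- Sums over vertices split over the connected components. -/
lemma sum_components {V : Type*} [Fintype V] (G : SimpleGraph V) (f : V → ℕ) :
    ∑ v, f v = ∑ K : G.ConnectedComponent, ∑ v : K.supp, f v := by
  rw [← Finset.sum_fiberwise (s := Finset.univ) (g := G.connectedComponentMk)]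
  refine Finset.sum_congr rfl fun K _ => ?_
  refine (Finset.sum_subtype _ (fun x => ?_) f)
  simp [ConnectedComponent.mem_supp_iff]

lemma degree_component {V : Type*} [Fintype V] (G : SimpleGraph V)
    (K : G.ConnectedComponent) (v : K.supp) :
    (G.induce K.supp).degree v = G.degree v := by
  have h := degree_induce_of_neighborSet_subset (G := G) (s := K.supp) (v := v)
    (fun w hw => K.mem_supp_of_adj_mem_supp v.2 hw)
  convert h

lemma card_edges_components {V : Type*} [Fintype V] (G : SimpleGraph V) :
    Nat.card G.edgeSet = ∑ K : G.ConnectedComponent, Nat.card (G.induce K.supp).edgeSet := by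
  have h1 := G.sum_degrees_eq_twice_card_edges
  rw [sum_components G] at h1
  have h2 : ∀ K : G.ConnectedComponent, ∑ v : K.supp, G.degree v
      = 2 * Nat.card (G.induce K.supp).edgeSet := by
    intro K
    rw [Nat.card_eq_fintype_card, ← edgeFinset_card, ← sum_degrees_eq_twice_card_edges]
    exact Finset.sum_congr rfl fun v _ => (degree_component G K v).symm
  rw [Finset.sum_congr rfl fun K _ => h2 K, ← Finset.mul_sum] at h1
  rw [Nat.card_eq_fintype_card, ← edgeFinset_card]
  omega

lemma card_verts_components {V : Type*} [Fintype V] (G : SimpleGraph V) :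
    Fintype.card V = ∑ K : G.ConnectedComponent, Nat.card K.supp := by
  have := sum_components G (fun _ => 1)
  simpa using this

lemma component_connected {V : Type*} (G : SimpleGraph V) (K : G.ConnectedComponent) :
    (G.induce K.supp).Connected := K.connected_toSimpleGraph

lemma acyclic_count {V : Type*} [Fintype V] (F : SimpleGraph V) (hF : F.IsAcyclic) :
    Nat.card F.edgeSet + Nat.card F.ConnectedComponent = Fintype.card V := by
  rw [card_edges_components, card_verts_components F, Nat.card_eq_fintype_card,
    ← Finset.card_univ, Finset.card_eq_sum_ones, ← Finset.sum_add_distrib]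
  refine Finset.sum_congr rfl fun K _ => ?_
  exact (isTree_iff_connected_and_card.1 ⟨component_connected F K, hF.induce _⟩).2

lemma component_count {V : Type*} [Fintype V] (G : SimpleGraph V)
    (hdeg : ∀ v : V, G.degree v ≤ 2) (K : G.ConnectedComponent) :
    Nat.card (G.induce K.supp).edgeSet + 1
      = Nat.card K.supp + if ¬ (G.induce K.supp).IsAcyclic then 1 else 0 := by
  have hcon := component_connected G K
  have hle := hcon.card_vert_le_card_edgeSet_add_one
  have hiff := isTree_iff_connected_and_card (G := G.induce K.supp)
  have hub : Nat.card (G.induce K.supp).edgeSet ≤ Nat.card K.supp := by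
    have h := (G.induce K.supp).sum_degrees_eq_twice_card_edges
    have h3 : ∑ v : K.supp, (G.induce K.supp).degree v ≤ ∑ v : K.supp, 2 :=
      Finset.sum_le_sum fun v _ => by rw [degree_component]; exact hdeg v
    rw [h] at h3
    rw [Nat.card_eq_fintype_card, ← edgeFinset_card, Nat.card_eq_fintype_card]
    simp only [Finset.sum_const, Finset.card_univ, smul_eq_mul] at h3
    omega
  by_cases ha : (G.induce K.supp).IsAcyclic
  · rw [if_neg (not_not.2 ha)]
    exact (hiff.1 ⟨hcon, ha⟩).2
  · rw [if_pos ha]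
    have : Nat.card (G.induce K.supp).edgeSet + 1 ≠ Nat.card K.supp :=
      fun h => ha (hiff.2 ⟨hcon, h⟩).isAcyclic
    omega

lemma degree_two_count {V : Type*} [Fintype V] (G : SimpleGraph V)
    (hdeg : ∀ v : V, G.degree v ≤ 2) :
    Nat.card G.edgeSet + Nat.card G.ConnectedComponent
      = Fintype.card V + numCycleComponents G := by
  have hc : numCycleComponents G
      = ∑ K : G.ConnectedComponent, if ¬ (G.induce K.supp).IsAcyclic then 1 else 0 := by
    rw [numCycleComponents, Nat.card_eq_fintype_card, Fintype.card_subtype,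
      Finset.card_filter]
  rw [hc, card_edges_components, card_verts_components G, Nat.card_eq_fintype_card,
    ← Finset.card_univ, Finset.card_eq_sum_ones, ← Finset.sum_add_distrib,
    ← Finset.sum_add_distrib]
  exact Finset.sum_congr rfl fun K _ => component_count G hdeg K

lemma card_components_eq {V : Type*} (F G : SimpleGraph V)
    (h : F.Reachable = G.Reachable) :
    Nat.card F.ConnectedComponent = Nat.card G.ConnectedComponent := by
  unfold SimpleGraph.ConnectedComponent
  rw [h]

lemma weight_eq {V : Type*} [Fintype V] (G T : SimpleGraph V) :
    metricWeight G T + Nat.card (T ⊓ G).edgeSet = 2 * Nat.card T.edgeSet := by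
  have h : Nat.card (T ⊓ G).edgeSet = ∑ e ∈ T.edgeFinset, if e ∈ G.edgeSet then 1 else 0 := by
    rw [Nat.card_eq_fintype_card, ← edgeFinset_card, ← Finset.card_filter]
    congr 1
    ext e
    simp
  rw [h, metricWeight, ← Finset.sum_add_distrib, Nat.card_eq_fintype_card (α := T.edgeSet),
    ← edgeFinset_card, Finset.card_eq_sum_ones, Finset.mul_sum]
  exact Finset.sum_congr rfl fun e _ => by split_ifs <;> rfl

lemma card_edges_mono {V : Type*} [Fintype V] {F G : SimpleGraph V} (h : F ≤ G) :
    Nat.card F.edgeSet ≤ Nat.card G.edgeSet :=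
  Nat.card_mono (Set.toFinite _) (edgeSet_mono h)

/-- for a graph `G` on `n ≥ 2` vertices all of whose degrees are at most `2`
(a disjoint union of paths and cycles), letting `c` be the number of connected components
containing a cycle, the minimum weight of a spanning tree of the complete graph in the
`(1,2)`-metric obtained from `G` is `2(n-1) - (|E(G)| - c)`. -/
theorem stmt_2 {V : Type*} [Fintype V] (n c : ℕ) (hn : 2 ≤ n)
    (hcard : Fintype.card V = n) (G : SimpleGraph V)
    (hdeg : ∀ v : V, G.degree v ≤ 2)
    (hc : numCycleComponents G = c) :
    IsLeast {m : ℤ | ∃ T : SimpleGraph V, T.IsTree ∧ (metricWeight G T : ℤ) = m}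
      (2 * ((n : ℤ) - 1) - ((G.edgeFinset.card : ℤ) - c)) := by
  have hG := degree_two_count G hdeg
  rw [hc, hcard, Nat.card_eq_fintype_card, ← edgeFinset_card] at hG
  have hne : Nonempty V := Fintype.card_pos_iff.1 (by omega)
  have hlow : ∀ T : SimpleGraph V, T.IsTree →
      (2 * ((n : ℤ) - 1) - ((G.edgeFinset.card : ℤ) - c)) ≤ metricWeight G T := by
    intro T hT
    obtain ⟨F, hTF, hFG, hF, hr⟩ := G.exists_isAcyclic_reachable_eq_le_of_le_of_isAcyclic
      (H := T ⊓ G) inf_le_right (hT.isAcyclic.anti inf_le_left)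
    have h1 := acyclic_count F hF
    rw [card_components_eq F G hr] at h1
    have h2 := card_edges_mono hTF
    have h3 := weight_eq G T
    have h4 := (isTree_iff_connected_and_card.1 hT).2
    rw [Nat.card_eq_fintype_card (α := V)] at h4
    omega
  constructor
  · obtain ⟨F, hFG, hF, hr⟩ := G.exists_isAcyclic_reachable_eq_le
    obtain ⟨T, hFT, -, hT⟩ := (connected_top (V := V)).exists_isTree_le_of_le_of_isAcyclic
      (H := F) le_top hF
    refine ⟨T, hT, le_antisymm ?_ (hlow T hT)⟩
    have h1 := acyclic_count F hF
    rw [card_components_eq F G hr] at h1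
    have h2 := card_edges_mono (le_inf hFT hFG)
    have h3 := weight_eq G T
    have h4 := (isTree_iff_connected_and_card.1 hT).2
    rw [Nat.card_eq_fintype_card (α := V)] at h4
    omega
  · rintro m ⟨T, hT, rfl⟩
    exact hlow T hT
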